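/- Let Z be a standard normal random variable, and for S_0 > 0, K > 0, σ > 0, r ∈ ℝ, T > 0 set S_T = S_0 exp( (r − σ²/2) T + σ √T Z ). Then the discounted expected put payoff admits the Black–Scholes closed form: e^{−rT} · E[ (K − S_T)^+ ] = K e^{−rT} Φ(−d_2) − S_0 Φ(−d_1), where d_1 = ( log(S_0/K) + (r + σ²/2) T ) / (σ √T), d_2 = d_1 − σ √T, and Φ is the standard normal cumulative distribution function. -/

import Mathlib

open MeasureTheory ProbabilityTheory Filter Set
open scoped ENNReal NNReal

/-!
The payoff is `K - S_T` on the exercise event `{S_T ≤ K}` and vanishes off it, so its expectation is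
`K * P(S_T ≤ K) - E[S_T; S_T ≤ K]`. The log-price is Gaussian with some mean `m` and variance `v`,
and weighting by `S_T = exp (log S_T)` is, up to the factor `E[S_T] = exp (m + v / 2)`, the
exponential tilt of that law, which is Gaussian with mean `m + v` and the same variance. Both terms
are thus Gaussian distribution functions evaluated at `log K`; standardizing them gives `Φ (-d₂)`
and `Φ (-d₁)`.
-/

lemma integral_max_const_sub_zero {Ω : Type*} [MeasurableSpace Ω] {μ : Measure Ω}
    [IsFiniteMeasure μ] {X : Ω → ℝ} (hX : Integrable X μ) (c : ℝ) :
    ∫ ω, max (c - X ω) 0 ∂μ = c * μ.real {ω | X ω ≤ c} - ∫ ω in {ω | X ω ≤ c}, X ω ∂μ := by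
  have h_null : NullMeasurableSet {ω | X ω ≤ c} μ :=
    nullMeasurableSet_le hX.aemeasurable aemeasurable_const
  have h_indicator (ω : Ω) :
      max (c - X ω) 0 = {ω | X ω ≤ c}.indicator (fun ω ↦ c - X ω) ω := by
    by_cases h : X ω ≤ c
    · simp [h]
    · simp [h, (not_le.mp h).le]
  simp_rw [h_indicator]
  rw [integral_indicator₀ h_null, integral_sub (integrable_const c) hX.integrableOn,
    setIntegral_const, smul_eq_mul, mul_comm]

lemma complexMGF_tilted_mul {Ω : Type*} [MeasurableSpace Ω] (X : Ω → ℝ)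
    (μ : Measure Ω) (t : ℝ) (z : ℂ) :
    complexMGF X (μ.tilted (t * X ·)) z = complexMGF X μ (t + z) / mgf X μ t := by
  simp only [complexMGF, integral_tilted_mul_eq_mgf, Complex.real_smul]
  rw [← integral_div]
  congr with ω
  push_cast
  rw [add_mul, Complex.exp_add]
  ring

section Gaussian

variable (m : ℝ) (v : ℝ≥0)

lemma gaussianReal_tilted_mul (t : ℝ) :
    (gaussianReal m v).tilted (t * ·) = gaussianReal (m + v * t) v := by
  have : IsProbabilityMeasure ((gaussianReal m v).tilted (t * ·)) :=
    isProbabilityMeasure_tilted (integrable_exp_mul_gaussianReal t)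
  refine Measure.ext_of_complexMGF_id_eq (funext fun z ↦ ?_)
  have h_tilt := complexMGF_tilted_mul id (gaussianReal m v) t z
  simp only [id_eq] at h_tilt
  rw [h_tilt, complexMGF_id_gaussianReal, complexMGF_id_gaussianReal, mgf_id_gaussianReal]
  push_cast
  rw [← Complex.exp_sub]
  ring_nf

lemma setIntegral_exp_mul_gaussianReal (t : ℝ) (s : Set ℝ) :
    ∫ x in s, Real.exp (t * x) ∂gaussianReal m v =
      Real.exp (m * t + v * t ^ 2 / 2) * (gaussianReal (m + v * t) v).real s := by
  have h_tilt := setIntegral_tilted_mul_eq_mgf (μ := gaussianReal m v) (X := id) (t := t)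
    (fun _ ↦ (1 : ℝ)) s
  simp only [id_eq, gaussianReal_tilted_mul, mgf_id_gaussianReal, setIntegral_const, smul_eq_mul,
    mul_one, integral_div] at h_tilt
  rw [h_tilt, mul_div_cancel₀ _ (Real.exp_ne_zero _)]

lemma integral_max_const_sub_exp_gaussianReal {K : ℝ} (hK : 0 < K) :
    ∫ x, max (K - Real.exp x) 0 ∂gaussianReal m v =
      K * cdf (gaussianReal m v) (Real.log K) -
        Real.exp (m + v / 2) * cdf (gaussianReal (m + v) v) (Real.log K) := by
  have h_integrable : Integrable Real.exp (gaussianReal m v) := by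
    simpa using integrable_exp_mul_gaussianReal (μ := m) (v := v) 1
  have h_exercise : {x | Real.exp x ≤ K} = Iic (Real.log K) := by
    ext x
    exact (Real.le_log_iff_exp_le hK).symm
  have h_tilt := setIntegral_exp_mul_gaussianReal m v 1 (Iic (Real.log K))
  simp only [one_mul, mul_one, one_pow] at h_tilt
  rw [integral_max_const_sub_zero h_integrable, h_exercise, h_tilt, cdf_eq_real, cdf_eq_real]

lemma hasLaw_gaussianReal_const_add_mul {Ω : Type*} [MeasurableSpace Ω] {P : Measure Ω}
    {Z : Ω → ℝ} (hZ : HasLaw Z (gaussianReal 0 1) P) (s : ℝ≥0) :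
    HasLaw (fun ω ↦ m + s * Z ω) (gaussianReal m (s ^ 2)) P := by
  convert gaussianReal_const_add (gaussianReal_const_mul hZ s) m using 2
  · simp
  · exact (mul_one _).symm

lemma cdf_gaussianReal_eq_cdf_standard {s : ℝ≥0} (hs : 0 < s) (x : ℝ) :
    cdf (gaussianReal m (s ^ 2)) x = cdf (gaussianReal 0 1) ((x - m) / s) := by
  have h_law : HasLaw (fun y ↦ m + s * y) (gaussianReal m (s ^ 2)) (gaussianReal 0 1) :=
    hasLaw_gaussianReal_const_add_mul m HasLaw.id s
  have h_event : {y | m + s * y ≤ x} = Iic ((x - m) / s) := by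
    ext y
    rw [mem_ofPred_eq, mem_Iic, le_div_iff₀' (NNReal.coe_pos.mpr hs), le_sub_iff_add_le']
  rw [cdf_eq_real, cdf_eq_real, ← h_event]
  exact (h_law.measureReal_eq measurableSet_Iic).symm

variable {v} in
lemma cdf_gaussianReal_eq_integral (hv : v ≠ 0) (x : ℝ) :
    cdf (gaussianReal m v) x = ∫ u in Iic x, gaussianPDFReal m v u := by
  rw [cdf_eq_real, measureReal_def, gaussianReal_apply_eq_integral m hv,
    ENNReal.toReal_ofReal (integral_nonneg (gaussianPDFReal_nonneg m v))]

lemma cdf_gaussianReal_zero_one (x : ℝ) :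
    cdf (gaussianReal 0 1) x = (√(2 * Real.pi))⁻¹ * ∫ u in Iic x, Real.exp (-u ^ 2 / 2) := by
  rw [cdf_gaussianReal_eq_integral 0 one_ne_zero, ← integral_const_mul]
  simp [gaussianPDFReal]

end Gaussian

lemma integral_max_const_sub_mul_exp_of_hasLaw {Ω : Type*} [MeasurableSpace Ω]
    {P : Measure Ω} {Z : Ω → ℝ} (hZ : HasLaw Z (gaussianReal 0 1) P) {S K s : ℝ}
    (hS : 0 < S) (hK : 0 < K) (hs : 0 < s) (a : ℝ) :
    ∫ ω, max (K - S * Real.exp (a + s * Z ω)) 0 ∂P =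
      K * cdf (gaussianReal 0 1) ((Real.log (K / S) - a) / s) -
        S * Real.exp (a + s ^ 2 / 2) *
          cdf (gaussianReal 0 1) ((Real.log (K / S) - a) / s - s) := by
  lift s to ℝ≥0 using hs.le
  rw [NNReal.coe_pos] at hs
  have h_law : HasLaw (fun ω ↦ (Real.log S + a) + s * Z ω)
      (gaussianReal (Real.log S + a) (s ^ 2)) P := hasLaw_gaussianReal_const_add_mul _ hZ s
  have h_exp (y : ℝ) : S * Real.exp (a + y) = Real.exp (Real.log S + a + y) := by
    rw [add_assoc, Real.exp_add (Real.log S), Real.exp_log hS]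
  have h_payoff : ∫ ω, max (K - Real.exp (Real.log S + a + s * Z ω)) 0 ∂P =
      ∫ x, max (K - Real.exp x) 0 ∂gaussianReal (Real.log S + a) (s ^ 2) :=
    h_law.integral_comp (f := fun x ↦ max (K - Real.exp x) 0)
      (Continuous.aestronglyMeasurable (by fun_prop))
  have h_strike : (Real.log K - (Real.log S + a)) / s = (Real.log (K / S) - a) / s := by
    rw [Real.log_div hK.ne' hS.ne', sub_sub]
  have h_strike_tilted : (Real.log K - (Real.log S + a + s ^ 2)) / s =
      (Real.log (K / S) - a) / s - s := by
    rw [← sub_sub, sub_div, h_strike, sq, mul_self_div_self]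
  simp_rw [h_exp]
  rw [h_payoff, integral_max_const_sub_exp_gaussianReal _ _ hK,
    cdf_gaussianReal_eq_cdf_standard _ hs, cdf_gaussianReal_eq_cdf_standard _ hs, NNReal.coe_pow,
    h_strike, h_strike_tilted]

/-- Black–Scholes closed form for the discounted expected put payoff: if `Z` is
standard normal and `S_T = S₀ exp((r − σ²/2)T + σ√T Z)`, then
`e^{−rT} E[(K − S_T)⁺] = K e^{−rT} Φ(−d₂) − S₀ Φ(−d₁)`, where
`d₁ = (log(S₀/K) + (r + σ²/2)T)/(σ√T)`, `d₂ = d₁ − σ√T` and `Φ` is the standard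
normal cumulative distribution function. -/
theorem black_scholes_put
    {Ω : Type*} [MeasurableSpace Ω] (P : Measure Ω) [IsProbabilityMeasure P]
    (Z : Ω → ℝ) (hZm : Measurable Z) (hZ : Measure.map Z P = gaussianReal 0 1)
    (S0 K σ r T : ℝ) (hS0 : 0 < S0) (hK : 0 < K) (hσ : 0 < σ) (hT : 0 < T)
    (Φ : ℝ → ℝ)
    (hΦ : ∀ x, Φ x = (Real.sqrt (2 * Real.pi))⁻¹ * ∫ u in Iic x, Real.exp (-u ^ 2 / 2))
    (d1 d2 : ℝ)
    (hd1 : d1 = (Real.log (S0 / K) + (r + σ ^ 2 / 2) * T) / (σ * Real.sqrt T))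
    (hd2 : d2 = d1 - σ * Real.sqrt T) :
    Real.exp (-r * T) *
        ∫ ω, max (K - S0 * Real.exp ((r - σ ^ 2 / 2) * T + σ * Real.sqrt T * Z ω)) 0 ∂P =
      K * Real.exp (-r * T) * Φ (-d2) - S0 * Φ (-d1) := by
  generalize hs : σ * √T = s at hd1 hd2 ⊢
  have hs_pos : 0 < s := hs ▸ mul_pos hσ (Real.sqrt_pos.mpr hT)
  have hs_sq : s ^ 2 = σ ^ 2 * T := by rw [← hs, mul_pow, Real.sq_sqrt hT.le]
  have hΦ_cdf : Φ = cdf (gaussianReal 0 1) :=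
    funext fun x ↦ (hΦ x).trans (cdf_gaussianReal_zero_one x).symm
  have h_d2 : (Real.log (K / S0) - (r - σ ^ 2 / 2) * T) / s = -d2 := by
    rw [hd2, hd1, Real.log_div hS0.ne' hK.ne', Real.log_div hK.ne' hS0.ne']
    field_simp
    linear_combination -2 * hs_sq
  have h_d1 : -d2 - s = -d1 := by rw [hd2]; ring
  have h_discount : Real.exp (-r * T) * Real.exp ((r - σ ^ 2 / 2) * T + s ^ 2 / 2) = 1 := by
    rw [← Real.exp_add, Real.exp_eq_one_iff, hs_sq]
    ring
  rw [integral_max_const_sub_mul_exp_of_hasLaw ⟨hZm.aemeasurable, hZ⟩ hS0 hK hs_pos, h_d2,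
    h_d1, ← hΦ_cdf]
  linear_combination -S0 * Φ (-d1) * h_discount
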